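/- Let P(σ) : K → R be holomorphic near σ₀, invertible for σ ≠ σ₀, with P(σ₀) = 0, where dim K = dim R = d. Then one can choose ψ₁,…,ψ_d ∈ 𝔐_{σ₀}(K) with P·ψ_j holomorphic, the values (P·ψ_j)(σ₀) a basis of R, and such that, writing ψ_j = Σ_{ℓ=0}^{μ_j−1} (σ−σ₀)^{ℓ−μ_j} ψ_{jℓ} + (holomorphic), the leading coefficients ψ_{1,0},…,ψ_{d,0} are linearly independent in K. -/

import Mathlib

/-!
Call `φ` a root function of `P` at `σ₀` when `P(σ) φ(σ) = (σ - σ₀) ^ m β(σ)` with `φ` and `β`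
holomorphic; then `ψ = (σ - σ₀) ^ (-m) φ` satisfies `P ψ = β`, and its coefficient at
`(σ - σ₀) ^ (-m)` is `φ(σ₀)`. The adjugate of `P` provides `d` root functions for which the
`β_j(σ₀)` form a basis of `R`; take such a system with `∑ m_j` minimal. If there were a relation
`∑ a_j φ_j(σ₀) = 0`, choose `k` in its support with `m_k` minimal, replace `φ_k` by `∑ a_j φ_j`,
which multiplies `β_k(σ₀)` by `a_k` and adds a combination of the other `β_j(σ₀)`, and divide
by `σ - σ₀`: this lowers `m_k` by one, contradicting minimality.
-/

open Filter Function Topology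

section Analytic

variable {𝕜 E F : Type*} [NontriviallyNormedField 𝕜] [NormedAddCommGroup E] [NormedSpace 𝕜 E]
  [NormedAddCommGroup F] [NormedSpace 𝕜 F]

lemma analyticAt_clm_apply {G : Type*} [NormedAddCommGroup G] [NormedSpace 𝕜 G]
    {A : G → E →L[𝕜] F} {f : G → E} {x : G} (hA : AnalyticAt 𝕜 A x) (hf : AnalyticAt 𝕜 f x) :
    AnalyticAt 𝕜 (fun y ↦ A y (f y)) x :=
  ((ContinuousLinearMap.id 𝕜 (E →L[𝕜] F)).analyticAt_bilinear (A x, f x)).comp₂ hA hf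

lemma analyticAt_matrix_det {n : Type*} [Fintype n] [DecidableEq n] {M : E → Matrix n n 𝕜} {x : E}
    (hM : ∀ i j, AnalyticAt 𝕜 (fun y ↦ M y i j) x) : AnalyticAt 𝕜 (fun y ↦ (M y).det) x := by
  simp only [Matrix.det_apply']
  exact Finset.analyticAt_fun_sum _ fun σ _ ↦
    analyticAt_const.mul (Finset.analyticAt_fun_prod _ fun i _ ↦ hM (σ i) i)

lemma analyticAt_matrix_adjugate {n : Type*} [Fintype n] [DecidableEq n] {M : E → Matrix n n 𝕜}
    {x : E} (hM : ∀ i j, AnalyticAt 𝕜 (fun y ↦ M y i j) x) (i j : n) :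
    AnalyticAt 𝕜 (fun y ↦ (M y).adjugate i j) x := by
  simp only [Matrix.adjugate_apply]
  refine analyticAt_matrix_det fun i' j' ↦ ?_
  rcases eq_or_ne i' j with rfl | hi'
  · simpa only [Matrix.updateRow_self] using analyticAt_const
  · simpa only [Matrix.updateRow_ne hi'] using hM i' j'

lemma analyticAt_toMatrix_apply [CompleteSpace 𝕜] {m n G : Type*} [Finite m] [Fintype n]
    [DecidableEq n] [NormedAddCommGroup G] [NormedSpace 𝕜 G] (b : Module.Basis n 𝕜 E)
    (b' : Module.Basis m 𝕜 F) {A : G → E →L[𝕜] F} {x : G} (hA : AnalyticAt 𝕜 A x) (i : m) (j : n) :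
    AnalyticAt 𝕜 (fun y ↦ LinearMap.toMatrix b b' (A y : E →ₗ[𝕜] F) i j) x := by
  have : FiniteDimensional 𝕜 F := b'.finiteDimensional_of_finite
  simp only [LinearMap.toMatrix_apply]
  exact ((b'.coord i).toContinuousLinearMap.analyticAt _).comp
    (analyticAt_clm_apply hA analyticAt_const)

lemma eventuallyEq_of_sub_smul_eventuallyEq {f g : 𝕜 → E} {z₀ : 𝕜} (hf : ContinuousAt f z₀)
    (hg : ContinuousAt g z₀) (h : ∀ᶠ z in 𝓝 z₀, (z - z₀) • f z = (z - z₀) • g z) :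
    f =ᶠ[𝓝 z₀] g := by
  refine (hf.eventuallyEq_nhds_iff_eventuallyEq_nhdsNE hg).1 ?_
  filter_upwards [h.filter_mono nhdsWithin_le_nhds, self_mem_nhdsWithin] with z hz hne
  exact smul_right_injective E (sub_ne_zero.2 hne) hz

lemma analyticAt_iterate_dslope {f : 𝕜 → E} {z₀ : 𝕜} (hf : AnalyticAt 𝕜 f z₀) (n : ℕ) :
    AnalyticAt 𝕜 ((swap dslope z₀)^[n] f) z₀ :=
  let ⟨_, hp⟩ := hf
  (hp.has_fpower_series_iterate_dslope_fslope n).analyticAt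

lemma eq_sum_pow_smul_add_pow_smul_iterate_dslope (f : 𝕜 → E) (z₀ z : 𝕜) (n : ℕ) :
    f z = (∑ ℓ ∈ Finset.range n, (z - z₀) ^ ℓ • (swap dslope z₀)^[ℓ] f z₀) +
      (z - z₀) ^ n • (swap dslope z₀)^[n] f z := by
  induction n with
  | zero => simp
  | succ n ih =>
    rw [Finset.sum_range_succ, pow_succ, mul_smul, iterate_succ_apply', swap, sub_smul_dslope,
      smul_sub, add_assoc, add_sub_cancel]
    exact ih

lemma zpow_neg_smul_eq_sum_zpow_smul_add_iterate_dslope (f : 𝕜 → E) {z₀ z : 𝕜} (hz : z ≠ z₀)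
    (n : ℕ) :
    (z - z₀) ^ (-(n : ℤ)) • f z =
      (∑ ℓ ∈ Finset.range n, (z - z₀) ^ ((ℓ : ℤ) - (n : ℤ)) • (swap dslope z₀)^[ℓ] f z₀) +
        (swap dslope z₀)^[n] f z := by
  have hz' : z - z₀ ≠ 0 := sub_ne_zero.2 hz
  conv_lhs => rw [eq_sum_pow_smul_add_pow_smul_iterate_dslope f z₀ z n]
  simp only [smul_add, Finset.smul_sum, smul_smul, ← zpow_natCast, ← zpow_add₀ hz',
    neg_add_cancel, zpow_zero, one_smul, neg_add_eq_sub]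

end Analytic

lemma apply_toLin_adjugate_toMatrix {A M N ι : Type*} [CommRing A] [AddCommGroup M] [Module A M]
    [AddCommGroup N] [Module A N] [Fintype ι] [DecidableEq ι] (b : Module.Basis ι A M)
    (b' : Module.Basis ι A N) (f : M →ₗ[A] N) (y : N) :
    f (Matrix.toLin b' b (LinearMap.toMatrix b b' f).adjugate y) =
      (LinearMap.toMatrix b b' f).det • y := by
  conv_lhs => enter [1]; rw [← Matrix.toLin_toMatrix b b' f]
  rw [← Matrix.toLin_mul_apply, Matrix.mul_adjugate, map_smul, Matrix.toLin_one,
    LinearMap.smul_apply, LinearMap.id_apply]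

lemma linearIndependent_update_sum_smul {A M ι : Type*} [CommRing A] [AddCommGroup M]
    [Module A M] [Fintype ι] [DecidableEq ι] {v : ι → M} (hv : LinearIndependent A v) {a : ι → A}
    {k : ι} (hk : a k ∈ nonZeroDivisors A) :
    LinearIndependent A (update v k (∑ j, a j • v j)) :=
  hv.update k _ ⟨1, one_mem _, Finsupp.equivFunOnFinite.symm a,
    hk, by simp [Finsupp.linearCombination_apply, Finsupp.sum_fintype]⟩

section RootFunction

variable {𝕜 K R ι : Type*} [NontriviallyNormedField 𝕜] [NormedAddCommGroup K] [NormedSpace 𝕜 K]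
  [NormedAddCommGroup R] [NormedSpace 𝕜 R] {P : 𝕜 → K →L[𝕜] R} {σ₀ : 𝕜}

/-- A root function of the operator family `P` at `σ₀`, in the sense of Gohberg and Sigal: a germ
`φ` with `P φ = (σ - σ₀) ^ m β`, here bundled with `m` (`order`) and `β` (`image`). It encodes the
meromorphic germ `ψ = (σ - σ₀) ^ (-m) φ` with `P ψ = β`. Neither `φ(σ₀) ≠ 0` nor `β(σ₀) ≠ 0` is part
of the definition. -/
structure RootFunction (P : 𝕜 → K →L[𝕜] R) (σ₀ : 𝕜) where
  toFun : 𝕜 → K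
  image : 𝕜 → R
  order : ℕ
  analyticAt_toFun : AnalyticAt 𝕜 toFun σ₀
  analyticAt_image : AnalyticAt 𝕜 image σ₀
  eventually_apply_eq : ∀ᶠ σ in 𝓝 σ₀, P σ (toFun σ) = (σ - σ₀) ^ order • image σ

namespace RootFunction

lemma order_pos {F : RootFunction P σ₀} (hF : F.image σ₀ ≠ 0) (h₀ : P σ₀ (F.toFun σ₀) = 0) :
    0 < F.order := by
  by_contra! h
  have h_eq := F.eventually_apply_eq.self_of_nhds
  rw [h₀, Nat.le_zero.1 h, pow_zero, one_smul] at h_eq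
  exact hF h_eq.symm

/-- The linear combination `∑ a_j φ_j`, with the common power `(σ - σ₀) ^ m` split off its image. -/
def linearCombination [Fintype ι] (F : ι → RootFunction P σ₀) (a : ι → 𝕜) (m : ℕ)
    (hm : ∀ j, a j ≠ 0 → m ≤ (F j).order) : RootFunction P σ₀ where
  toFun σ := ∑ j, a j • (F j).toFun σ
  image σ := ∑ j, (a j * (σ - σ₀) ^ ((F j).order - m)) • (F j).image σ
  order := m
  analyticAt_toFun := Finset.analyticAt_fun_sum _ fun j _ ↦
    analyticAt_const.smul (F j).analyticAt_toFun
  analyticAt_image := Finset.analyticAt_fun_sum _ fun j _ ↦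
    (analyticAt_const.mul ((analyticAt_id.sub analyticAt_const).pow _)).smul
      (F j).analyticAt_image
  eventually_apply_eq := by
    filter_upwards [eventually_all.2 fun j ↦ (F j).eventually_apply_eq] with σ hσ
    simp only [map_sum, map_smul, Finset.smul_sum, hσ, smul_smul]
    refine Finset.sum_congr rfl fun j _ ↦ ?_
    by_cases ha : a j = 0
    · simp only [ha, zero_mul, mul_zero]
    · rw [mul_left_comm, ← pow_add, Nat.add_sub_cancel' (hm j ha)]

/-- The quotient `φ / (σ - σ₀)` of a root function vanishing at `σ₀`: the image is unchanged and the
order drops by one. -/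
noncomputable def divSub (F : RootFunction P σ₀) (hP : ContinuousAt P σ₀) (h₀ : F.toFun σ₀ = 0)
    (hm : 0 < F.order) : RootFunction P σ₀ where
  toFun := dslope F.toFun σ₀
  image := F.image
  order := F.order - 1
  analyticAt_toFun := analyticAt_iterate_dslope F.analyticAt_toFun 1
  analyticAt_image := F.analyticAt_image
  eventually_apply_eq := by
    refine eventuallyEq_of_sub_smul_eventuallyEq
      (hP.clm_apply (analyticAt_iterate_dslope F.analyticAt_toFun 1).continuousAt)
      (((continuousAt_id.sub continuousAt_const).pow _).smul F.analyticAt_image.continuousAt) ?_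
    filter_upwards [F.eventually_apply_eq] with σ hσ
    rw [← map_smul, sub_smul_dslope_of_zero h₀, hσ, smul_smul, ← pow_succ',
      Nat.sub_add_cancel hm]

lemma exists_linearIndependent_image [CompleteSpace 𝕜] [Finite ι] (b : Module.Basis ι 𝕜 K)
    (hP : AnalyticAt 𝕜 P σ₀) (hinv : ∃ᶠ σ in 𝓝 σ₀, Bijective (P σ)) :
    ∃ F : ι → RootFunction P σ₀, LinearIndependent 𝕜 fun j ↦ (F j).image σ₀ := by
  classical
  cases nonempty_fintype ι
  obtain ⟨σ₁, h₁⟩ := hinv.exists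
  let b' : Module.Basis ι 𝕜 R := b.map (.ofBijective (P σ₁ : K →ₗ[𝕜] R) h₁)
  let M : 𝕜 → Matrix ι ι 𝕜 := fun σ ↦ LinearMap.toMatrix b b' (P σ)
  have hM : ∀ i j, AnalyticAt 𝕜 (fun σ ↦ M σ i j) σ₀ := analyticAt_toMatrix_apply b b' hP
  have h_det : ¬ ∀ᶠ σ in 𝓝 σ₀, (M σ).det = 0 := fun h ↦ by
    obtain ⟨σ, hσ, h_zero⟩ := (hinv.and_eventually h).exists
    exact ((LinearEquiv.ofBijective (P σ : K →ₗ[𝕜] R) hσ).isUnit_det b b').ne_zero h_zero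
  obtain ⟨n, g, hg, hg₀, h_factor⟩ :=
    (analyticAt_matrix_det hM).exists_eventuallyEq_pow_smul_nonzero_iff.2 h_det
  have h_adj (j : ι) : AnalyticAt 𝕜 (fun σ ↦ Matrix.toLin b' b (M σ).adjugate (b' j)) σ₀ := by
    simp only [Matrix.toLin_self]
    exact Finset.analyticAt_fun_sum _ fun i _ ↦
      (analyticAt_matrix_adjugate hM i j).smul analyticAt_const
  refine ⟨fun j ↦ ⟨fun σ ↦ Matrix.toLin b' b (M σ).adjugate (b' j), fun σ ↦ g σ • b' j, n, h_adj j,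
    hg.smul analyticAt_const, ?_⟩, b'.linearIndependent.units_smul fun _ ↦ Units.mk0 _ hg₀⟩
  filter_upwards [h_factor] with σ hσ
  rw [smul_smul, ← smul_eq_mul, ← hσ]
  exact apply_toLin_adjugate_toMatrix b b' (P σ) (b' j)

lemma exists_sum_order_lt [Fintype ι] {F : ι → RootFunction P σ₀} (hP : ContinuousAt P σ₀)
    (hβ : LinearIndependent 𝕜 fun j ↦ (F j).image σ₀)
    (hφ : ¬ LinearIndependent 𝕜 fun j ↦ (F j).toFun σ₀) :
    ∃ G : ι → RootFunction P σ₀, LinearIndependent 𝕜 (fun j ↦ (G j).image σ₀) ∧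
      ∑ j, (G j).order < ∑ j, (F j).order := by
  classical
  obtain ⟨a, h_rel, i, hi⟩ := Fintype.not_linearIndependent_iff.1 hφ
  obtain ⟨k, hk, h_min⟩ := Set.exists_min_image {j | a j ≠ 0} (fun j ↦ (F j).order)
    (Set.toFinite _) ⟨i, hi⟩
  let S : RootFunction P σ₀ := linearCombination F a (F k).order h_min
  have hS : LinearIndependent 𝕜 (update (fun j ↦ (F j).image σ₀) k (S.image σ₀)) :=
    linearIndependent_update_sum_smul hβ (mem_nonZeroDivisors_of_ne_zero (by simpa using hk))
  have hS_image : S.image σ₀ ≠ 0 := by simpa only [update_self] using hS.ne_zero k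
  have hS_toFun : S.toFun σ₀ = 0 := h_rel
  have hS_order : 0 < S.order := order_pos hS_image (by rw [hS_toFun, map_zero])
  refine ⟨update F k (S.divSub hP hS_toFun hS_order), ?_, ?_⟩
  · convert hS using 1
    exact comp_update (fun G : RootFunction P σ₀ ↦ G.image σ₀) F k _
  · refine Finset.sum_lt_sum (fun j _ ↦ ?_) ⟨k, Finset.mem_univ k, ?_⟩
    · rcases eq_or_ne j k with rfl | hj
      · rw [update_self]
        exact Nat.sub_le _ _
      · rw [update_of_ne hj]
    · rw [update_self]
      exact Nat.sub_one_lt hS_order.ne'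

lemma exists_linearIndependent_toFun [Finite ι] (hP : ContinuousAt P σ₀) (F : ι → RootFunction P σ₀)
    (hβ : LinearIndependent 𝕜 fun j ↦ (F j).image σ₀) :
    ∃ G : ι → RootFunction P σ₀, LinearIndependent 𝕜 (fun j ↦ (G j).image σ₀) ∧
      LinearIndependent 𝕜 fun j ↦ (G j).toFun σ₀ := by
  cases nonempty_fintype ι
  induction hN : ∑ j, (F j).order using Nat.strong_induction_on generalizing F with
  | _ N ih =>
    by_cases hφ : LinearIndependent 𝕜 fun j ↦ (F j).toFun σ₀
    · exact ⟨F, hβ, hφ⟩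
    · obtain ⟨G, hG, h_lt⟩ := exists_sum_order_lt hP hβ hφ
      exact ih _ (hN ▸ h_lt) G hG rfl

lemma apply_zpow_neg_smul_eventuallyEq (F : RootFunction P σ₀) :
    ∀ᶠ σ in 𝓝[≠] σ₀, P σ ((σ - σ₀) ^ (-(F.order : ℤ)) • F.toFun σ) = F.image σ := by
  filter_upwards [F.eventually_apply_eq.filter_mono nhdsWithin_le_nhds, self_mem_nhdsWithin]
    with σ hσ hne
  rw [map_smul, hσ, zpow_neg, zpow_natCast, inv_smul_smul₀ (pow_ne_zero _ (sub_ne_zero.2 hne))]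

end RootFunction

-- If `μ j = 0`, the singular part of `ψ j` is empty and does not determine `c j 0`; the second
-- clause fixes it as the limit of `ψ j` at `σ₀`.
theorem stmt_7_general [CompleteSpace 𝕜] [Finite ι] (b : Module.Basis ι 𝕜 K)
    (hP : AnalyticAt 𝕜 P σ₀) (hinv : ∃ᶠ σ in 𝓝 σ₀, Bijective (P σ)) :
    ∃ (ψ : ι → 𝕜 → K) (β : ι → 𝕜 → R) (μ : ι → ℕ) (c : ι → ℕ → K) (h : ι → 𝕜 → K),
      (P σ₀ = 0 → ∀ j, 0 < μ j) ∧
      (∀ j, μ j = 0 → c j 0 = h j σ₀) ∧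
      (∀ j, AnalyticAt 𝕜 (β j) σ₀) ∧
      (∀ j, ∀ᶠ σ in 𝓝[≠] σ₀, β j σ = P σ (ψ j σ)) ∧
      LinearIndependent 𝕜 (fun j ↦ β j σ₀) ∧
      (∀ j, AnalyticAt 𝕜 (h j) σ₀) ∧
      (∀ j, ∀ᶠ σ in 𝓝[≠] σ₀,
        ψ j σ = (∑ ℓ ∈ Finset.range (μ j), (σ - σ₀) ^ ((ℓ : ℤ) - (μ j : ℤ)) • c j ℓ) + h j σ) ∧
      LinearIndependent 𝕜 (fun j ↦ c j 0) := by
  cases nonempty_fintype ι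
  obtain ⟨F, hF⟩ := RootFunction.exists_linearIndependent_image b hP hinv
  obtain ⟨G, hβ, hφ⟩ := RootFunction.exists_linearIndependent_toFun hP.continuousAt F hF
  refine ⟨fun j σ ↦ (σ - σ₀) ^ (-((G j).order : ℤ)) • (G j).toFun σ, fun j ↦ (G j).image,
    fun j ↦ (G j).order, fun j ℓ ↦ (swap dslope σ₀)^[ℓ] (G j).toFun σ₀,
    fun j ↦ (swap dslope σ₀)^[(G j).order] (G j).toFun, fun h_zero j ↦ ?_, fun j hj ↦ ?_,
    fun j ↦ (G j).analyticAt_image, fun j ↦ ?_, hβ,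
    fun j ↦ analyticAt_iterate_dslope (G j).analyticAt_toFun _, fun j ↦ ?_, hφ⟩
  · exact RootFunction.order_pos (hβ.ne_zero j) (by rw [h_zero, zero_apply])
  · simp only [hj]
  · exact (G j).apply_zpow_neg_smul_eventuallyEq.mono fun _ ↦ Eq.symm
  · filter_upwards [self_mem_nhdsWithin] with σ hne
    exact zpow_neg_smul_eq_sum_zpow_smul_add_iterate_dslope _ hne _

end RootFunction

/-- Refined structure theorem (Lemma mero2): for `P(σ) : K → R` holomorphic near `σ₀`,
invertible off `σ₀`, with `P(σ₀) = 0`, one can choose `ψ₁,…,ψ_d` with `P·ψ_j = β_j`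
holomorphic, `β_j(σ₀)` a basis of `R`, and such that in the Laurent expansions
`ψ_j = Σ_{ℓ<μ_j} (σ−σ₀)^{ℓ−μ_j} ψ_{jℓ} + (holomorphic)` the leading coefficients
`ψ_{1,0},…,ψ_{d,0}` are linearly independent in `K`. -/
theorem stmt_7 {K R : Type*}
    [NormedAddCommGroup K] [NormedSpace ℂ K] [FiniteDimensional ℂ K]
    [NormedAddCommGroup R] [NormedSpace ℂ R] [FiniteDimensional ℂ R]
    (d : ℕ) (hd : 0 < d)
    (hK : Module.finrank ℂ K = d) (hR : Module.finrank ℂ R = d)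
    (σ₀ : ℂ) (P : ℂ → (K →L[ℂ] R)) (hP : AnalyticAt ℂ P σ₀)
    (hinv : ∀ᶠ σ in nhdsWithin σ₀ {σ₀}ᶜ, Function.Bijective (P σ))
    (hzero : P σ₀ = 0) :
    ∃ (ψ : Fin d → ℂ → K) (β : Fin d → ℂ → R) (μ : Fin d → ℕ)
      (c : Fin d → ℕ → K) (h : Fin d → ℂ → K),
      (∀ j, 0 < μ j) ∧
      (∀ j, AnalyticAt ℂ (β j) σ₀) ∧
      (∀ j, ∀ᶠ σ in nhdsWithin σ₀ {σ₀}ᶜ, β j σ = P σ (ψ j σ)) ∧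
      LinearIndependent ℂ (fun j => β j σ₀) ∧
      (∀ j, AnalyticAt ℂ (h j) σ₀) ∧
      (∀ j, ∀ᶠ σ in nhdsWithin σ₀ {σ₀}ᶜ,
        ψ j σ = (∑ ℓ ∈ Finset.range (μ j),
          ((σ - σ₀) ^ ((ℓ : ℤ) - (μ j : ℤ))) • c j ℓ) + h j σ) ∧
      LinearIndependent ℂ (fun j => c j 0) := by
  obtain ⟨ψ, β, μ, c, h, hμ, -, H⟩ := stmt_7_general (Module.finBasisOfFinrankEq ℂ K hK) hP
    (hinv.frequently.filter_mono nhdsWithin_le_nhds)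
  exact ⟨ψ, β, μ, c, h, hμ hzero, H⟩
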